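/- Under assumptions (A1)–(A4), if 1 − d* ≥ 0 then p* − 1 ≥ (R0/(D0 + R0))·(1 − d*)/d*. -/

import Mathlib

/-!
Let `d* < δ < 1` and pick `y` with `Φ y < δ`. By definition of the radial transform, the point
`x = e0 + (y - e0) / δ` satisfies `f x > 1 / δ`, while `φ_𝒮 y < δ < 1` makes `y` feasible
(`exists_point`). Extend the segment from `x` through `e0` beyond `e0` to the point
`z = e0 - (R0 / D0) (x - e0)`. Since `‖x - e0‖ ≤ D0`, the point `z` is within `R0` of `e0` and
hence in `S0`. Now `y` is the convex combination of `x` and `z` giving `x` the weight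
`(δ D0 + R0) / (D0 + R0)`, so concavity and upper semicontinuity yield
`p* ≥ f y ≥ (δ D0 + R0) / (δ (D0 + R0)) = 1 + (R0 / (D0 + R0)) (1 - δ) / δ` (`estimate`).
Letting `δ` decrease to `d*` gives the bound for `0 < d* < 1`.

For `d* = 1` no such `δ` exists and the claim is `p* ≥ 1`. There the points `x` obtained for
levels `δ ↓ 1` stay in the compact set `S0`; a cluster point `a` satisfies `f a ≥ 1` and
`φ_𝒮 a ≤ 1` by semicontinuity, and the Slater point shows that `a` is feasible (`one_le_pStar`).
That `x` lies in `S0` at all uses that `f` is finite everywhere (`ne_top_of_concave`).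
-/

open Set Filter Topology Classical

noncomputable section

namespace MultiRadial

variable {E : Type*} [NormedAddCommGroup E] [InnerProductSpace ℝ E] [FiniteDimensional ℝ E]

/-- The hypograph of an extended-positive-real-valued function `f`:
`{(x,u) ∈ E × ℝ | 0 < u ≤ f x}`.  `f` is "concave" iff this set is convex. -/
def hypo (f : E → ENNReal) : Set (E × ℝ) :=
  {p : E × ℝ | 0 < p.2 ∧ ENNReal.ofReal p.2 ≤ f p.1}

/-- The effective domain `dom f = {x | 0 < f x < ∞}`. -/
def edom (f : E → ENNReal) : Set E := {x | f x ≠ 0 ∧ f x ≠ ⊤}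

/-- The radial transformation `f^{Γ,e}(y) = sup {v > 0 | v * f (e + (y-e)/v) ≤ 1}`
(with `sup ∅ = 0`). -/
def radTrans (f : E → ENNReal) (e y : E) : ENNReal :=
  ⨆ v ∈ {v : ℝ | 0 < v ∧ ENNReal.ofReal v * f (e + v⁻¹ • (y - e)) ≤ 1}, ENNReal.ofReal v

/-- The gauge of `S` with respect to `e`: `γ_{S,e}(x) = inf {v > 0 | e + (x-e)/v ∈ S}`. -/
def gaugeFrom (S : Set E) (e x : E) : ℝ :=
  sInf {v : ℝ | 0 < v ∧ e + v⁻¹ • (x - e) ∈ S}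

/-- The interior radius of `S` with respect to `e`: `R_e(S) = inf {‖x - e‖ | x ∉ S}`. -/
def innerRadius (S : Set E) (e : E) : ℝ :=
  sInf ((fun x => ‖x - e‖) '' Sᶜ)

/-- The nonstandard indicator `ι̂_S` taking value `∞` on `S` and `0` elsewhere. -/
def indic (S : Set E) (x : E) : ENNReal := if x ∈ S then ⊤ else 0

/-- The data of the multiradial setting: objective `f`, constraint sets `S j`,
a candidate convex identifier `phiS`, the objective reference point `e0`,
a primal optimal solution `xstar`, and a Slater point `xSL`. -/
structure Setup (E : Type*) [NormedAddCommGroup E] [InnerProductSpace ℝ E] (m : ℕ) where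
  f : E → ENNReal
  S : Fin m → Set E
  phiS : E → ℝ
  e0 : E
  xstar : E
  xSL : E

variable {m : ℕ}

/-- `S0 = cl (dom f)`. -/
def Setup.S0 (P : Setup E m) : Set E := closure (edom P.f)

/-- The feasible region `𝒮 = ⋂ j, S j`. -/
def Setup.feas (P : Setup E m) : Set E := ⋂ j, P.S j

/-- `D0 = D(S0)`, the diameter of `S0`. -/
def Setup.D0 (P : Setup E m) : ℝ := Metric.diam P.S0

/-- `R0 = R_{e0}(S0)`. -/
def Setup.R0 (P : Setup E m) : ℝ := innerRadius P.S0 P.e0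

/-- The primal function `Ψ(x) = min {f x, ι̂_𝒮 x}`. -/
def Setup.Psi (P : Setup E m) (x : E) : ENNReal := min (P.f x) (indic P.feas x)

/-- The primal optimal value `p* = sup Ψ`. -/
def Setup.pStar (P : Setup E m) : ENNReal := ⨆ x, P.Psi x

/-- The multiradial dual function `Φ(y) = max {f^{Γ,e0} y, φ_𝒮 y}`. -/
def Setup.Phi (P : Setup E m) (y : E) : ENNReal :=
  max (radTrans P.f P.e0 y) (ENNReal.ofReal (P.phiS y))

/-- The dual optimal value `d* = inf Φ`. -/
def Setup.dStar (P : Setup E m) : ENNReal := ⨅ y, P.Phi y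

/-- `η = (1 - γ_{S0,e0}(x*)) * (1 - φ_𝒮(x_SL))`. -/
def Setup.eta (P : Setup E m) : ℝ :=
  (1 - gaugeFrom P.S0 P.e0 P.xstar) * (1 - P.phiS P.xSL)

/-- `ρ = R0 / (D0 + R0)`. -/
def Setup.rho (P : Setup E m) : ℝ := P.R0 / (P.D0 + P.R0)

/-- The rescaled primal function `Ψ_τ(x) = min {τ * f x, ι̂_𝒮 x}`. -/
def Setup.PsiT (P : Setup E m) (τ : ℝ) (x : E) : ENNReal :=
  min (ENNReal.ofReal τ * P.f x) (indic P.feas x)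

/-- The rescaled multiradial dual function `Φ_τ(y) = max {(τ f)^{Γ,e0} y, φ_𝒮 y}`. -/
def Setup.PhiT (P : Setup E m) (τ : ℝ) (y : E) : ENNReal :=
  max (radTrans (fun x => ENNReal.ofReal τ * P.f x) P.e0 y) (ENNReal.ofReal (P.phiS y))

/-- `p(τ) = sup Ψ_τ`. -/
def Setup.pVal (P : Setup E m) (τ : ℝ) : ENNReal := ⨆ x, P.PsiT τ x

/-- `d(τ) = inf Φ_τ`. -/
def Setup.dVal (P : Setup E m) (τ : ℝ) : ENNReal := ⨅ y, P.PhiT τ y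

/-- `c_τ = (η / p(τ)) * R0 / (D0 + R0)`. -/
def Setup.cVal (P : Setup E m) (τ : ℝ) : ℝ :=
  P.eta / (P.pVal τ).toReal * (P.R0 / (P.D0 + P.R0))

/-- Standing assumptions (A1)-(A4). -/
structure Assumptions (P : Setup E m) : Prop where
  /-- (A1) `f` is concave (its hypograph is convex). -/
  concave : Convex ℝ (hypo P.f)
  /-- (A1) `f` is upper semicontinuous. -/
  usc : UpperSemicontinuous P.f
  /-- (A1) `D0 = D(S0) < ∞`. -/
  diamFin : EMetric.diam P.S0 ≠ ⊤
  /-- (A2) each `S j` is closed. -/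
  closedS : ∀ j, IsClosed (P.S j)
  /-- (A2) each `S j` is convex. -/
  convexS : ∀ j, Convex ℝ (P.S j)
  /-- (A3) the identifier is lower semicontinuous. -/
  lscId : LowerSemicontinuous P.phiS
  /-- (A3) the identifier is convex. -/
  convexId : ConvexOn ℝ Set.univ P.phiS
  /-- (A3) `int 𝒮 = {x | φ_𝒮 x < 1}`. -/
  identifies : interior P.feas = {x | P.phiS x < 1}
  /-- (A3) `e0 ∈ int S0`. -/
  e0int : P.e0 ∈ interior P.S0
  /-- (A3) `R0 > 0`. -/
  R0pos : 0 < P.R0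
  /-- (A4) `x* ∈ 𝒮`. -/
  xstarFeas : P.xstar ∈ P.feas
  /-- (A4) `f x* = p*`. -/
  xstarOpt : P.f P.xstar = P.pStar
  /-- (A4) `p* > 0`. -/
  pStarPos : 0 < P.pStar
  /-- (A4) `p* < ∞`. -/
  pStarFin : P.pStar ≠ ⊤
  /-- (A4) `x_SL ∈ int 𝒮 ∩ dom f`. -/
  slater : P.xSL ∈ interior P.feas ∩ edom P.f
  /-- (A4) `η > 0`. -/
  etaPos : 0 < P.eta

/-! ### Concavity and finiteness of the objective -/

/-- The useful half of Jensen's inequality: only positivity of `f` at the second point is used,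
and its contribution is discarded. -/
lemma concave_lower {f : E → ENNReal} (hf : Convex ℝ (hypo f)) {x z : E} {a b u : ℝ}
    (ha : 0 ≤ a) (hb : 0 ≤ b) (hab : a + b = 1) (hu : 0 < u) (hx : ENNReal.ofReal u ≤ f x)
    (hz : f z ≠ 0) : ENNReal.ofReal (a * u) ≤ f (a • x + b • z) := by
  obtain ⟨w, hw, hwz⟩ : ∃ w : ℝ, 0 < w ∧ ENNReal.ofReal w ≤ f z := by
    by_cases ht : f z = ⊤
    · exact ⟨1, one_pos, by simp [ht]⟩
    · exact ⟨(f z).toReal, ENNReal.toReal_pos hz ht, ENNReal.ofReal_toReal_le⟩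
  have h1 : (x, u) ∈ hypo f := ⟨hu, hx⟩
  have h2 : (z, w) ∈ hypo f := ⟨hw, hwz⟩
  have h3 := (hf h1 h2 ha hb hab).2
  simp only [Prod.fst_add, Prod.smul_fst, Prod.snd_add, Prod.smul_snd, smul_eq_mul] at h3
  refine le_trans (ENNReal.ofReal_le_ofReal ?_) h3
  nlinarith [mul_nonneg hb hw.le]

/-- Upper semicontinuity extends `concave_lower` to second points in the closure of the domain. -/
lemma concave_lower_closure {f : E → ENNReal} (hf : Convex ℝ (hypo f))
    (husc : UpperSemicontinuous f) {x z : E} {a b u : ℝ}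
    (ha : 0 ≤ a) (hb : 0 ≤ b) (hab : a + b = 1) (hu : 0 < u) (hx : ENNReal.ofReal u ≤ f x)
    (hz : z ∈ closure (edom f)) : ENNReal.ofReal (a * u) ≤ f (a • x + b • z) := by
  have hc : IsClosed ((fun w : E => a • x + b • w) ⁻¹' (f ⁻¹' Ici (ENNReal.ofReal (a * u)))) :=
    (husc.isClosed_preimage _).preimage (by fun_prop)
  exact closure_minimal
    (fun w hw => concave_lower hf ha hb hab hu hx hw.1) hc hz

/-- A concave u.s.c. function with nonempty effective domain never takes the value `∞`: an
infinite value would spread along segments to every point where the function is positive, and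
upper semicontinuity would carry it to the endpoint. -/
lemma ne_top_of_concave {f : E → ENNReal} (hf : Convex ℝ (hypo f))
    (husc : UpperSemicontinuous f) {z : E} (hz : z ∈ edom f) (x : E) : f x ≠ ⊤ := by
  intro hx
  have hseg : ∀ a : ℝ, 0 < a → a ≤ 1 → f (a • x + (1 - a) • z) = ⊤ := by
    intro a ha ha1
    refine ENNReal.eq_top_of_forall_nnreal_le fun r => ?_
    have := concave_lower hf (x := x) (u := (r + 1) / a) ha.le (sub_nonneg.2 ha1) (by ring)
      (by positivity) (by simp [hx]) hz.1
    rw [mul_div_cancel₀ _ ha.ne'] at this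
    refine le_trans ?_ this
    rw [← ENNReal.ofReal_coe_nnreal]
    exact ENNReal.ofReal_le_ofReal (by linarith)
  have hc : IsClosed ((fun a : ℝ => a • x + (1 - a) • z) ⁻¹' (f ⁻¹' Ici ⊤)) :=
    (husc.isClosed_preimage _).preimage (by fun_prop)
  have h0 : (0 : ℝ) ∈ closure (Ioc (0 : ℝ) 1) := by
    rw [closure_Ioc (by norm_num)]; simp
  have h1 : ⊤ ≤ f ((0 : ℝ) • x + (1 - (0 : ℝ)) • z) :=
    closure_minimal (fun a ha => (hseg a ha.1 ha.2).ge) hc h0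
  rw [zero_smul, sub_zero, one_smul, zero_add] at h1
  exact hz.2 (top_le_iff.1 h1)

/-! ### The geometry of `S0` -/

lemma closedBall_subset_S0 (P : Setup E m) (hR : 0 < P.R0) :
    Metric.closedBall P.e0 P.R0 ⊆ P.S0 := by
  have hball : Metric.ball P.e0 P.R0 ⊆ P.S0 := by
    intro z hz
    by_contra hzS
    have : P.R0 ≤ ‖z - P.e0‖ :=
      csInf_le ⟨0, by rintro _ ⟨w, -, rfl⟩; exact norm_nonneg _⟩ ⟨z, hzS, rfl⟩
    rw [Metric.mem_ball, dist_eq_norm] at hz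
    linarith
  rw [← closure_ball _ hR.ne']
  exact closure_minimal hball isClosed_closure

/-- A space with `0 < R0` is nontrivial, because the infimum over the empty complement is `0`;
a sphere of radius `R0` around `e0` then has a point, and it lies in `S0`. -/
lemma D0_pos (P : Setup E m) (hb : Bornology.IsBounded P.S0) (hR : 0 < P.R0) : 0 < P.D0 := by
  have hne : (P.S0)ᶜ.Nonempty := by
    by_contra h0
    rw [not_nonempty_iff_eq_empty] at h0
    have : P.R0 = 0 := by simp [Setup.R0, innerRadius, h0]
    linarith
  obtain ⟨w, hw⟩ := hne
  have hsub := closedBall_subset_S0 P hR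
  have he : P.e0 ∈ P.S0 := hsub (Metric.mem_closedBall_self hR.le)
  have hwe : w ≠ P.e0 := fun h => hw (h ▸ he)
  have : Nontrivial E := ⟨w, P.e0, hwe⟩
  obtain ⟨v, hv⟩ := exists_norm_eq E hR.le
  have hz : P.e0 + v ∈ P.S0 := hsub (by simp [hv])
  have := Metric.dist_le_diam_of_mem hb hz he
  rw [dist_eq_norm, add_sub_cancel_left, hv] at this
  exact lt_of_lt_of_le hR this

/-! ### From the dual to the primal -/

/-- A dual value below `δ` yields a point `x` with `f x ≥ 1/δ` whose contraction
`e0 + δ (x - e0)` satisfies the constraint to level `δ`. -/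
lemma exists_point (P : Setup E m) (hP : Assumptions P) {δ : ℝ} (hδ : 0 < δ)
    (hd : P.dStar < ENNReal.ofReal δ) :
    ∃ x ∈ P.S0, ENNReal.ofReal δ⁻¹ ≤ P.f x ∧ P.phiS (P.e0 + δ • (x - P.e0)) < δ := by
  obtain ⟨y, hy⟩ := iInf_lt_iff.1 hd
  obtain ⟨hy1, hy2⟩ := max_lt_iff.1 hy
  have hfx : 1 < ENNReal.ofReal δ * P.f (P.e0 + δ⁻¹ • (y - P.e0)) := by
    by_contra hcon
    push Not at hcon
    refine absurd hy1 (not_lt.2 ?_)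
    exact le_iSup₂_of_le (f := fun (v : ℝ) (_ : v ∈ {v : ℝ | 0 < v ∧ ENNReal.ofReal v *
      P.f (P.e0 + v⁻¹ • (y - P.e0)) ≤ 1}) => ENNReal.ofReal v) δ ⟨hδ, hcon⟩ le_rfl
  refine ⟨P.e0 + δ⁻¹ • (y - P.e0), subset_closure ⟨?_, ?_⟩, ?_, ?_⟩
  · intro h0
    simp [h0] at hfx
  · exact ne_top_of_concave hP.concave hP.usc hP.slater.2 _
  · rw [ENNReal.ofReal_inv_of_pos hδ, ENNReal.inv_le_iff_le_mul (by simp [hδ])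
      (by simp)]
    exact hfx.le
  · rw [add_sub_cancel_left, smul_inv_smul₀ hδ.ne', add_sub_cancel]
    exact ((ENNReal.ofReal_lt_ofReal_iff hδ).1 hy2)

lemma le_pStar (P : Setup E m) {x : E} (hx : x ∈ P.feas) : P.f x ≤ P.pStar := by
  refine le_trans ?_ (le_iSup P.Psi x)
  simp [Setup.Psi, indic, hx]

/-- The sublevel set at level `1` of the identifier lies in `feas`: moving towards the Slater
point makes the identifier strictly less than `1`. -/
lemma mem_feas_of_phiS_le_one (P : Setup E m) (hP : Assumptions P) {x : E}
    (hx : P.phiS x ≤ 1) : x ∈ P.feas := by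
  have hcl : IsClosed P.feas := isClosed_iInter hP.closedS
  have hsl : P.phiS P.xSL < 1 := by
    have := hP.slater.1
    rwa [hP.identifies] at this
  have hc : IsClosed ((fun a : ℝ => a • P.xSL + (1 - a) • x) ⁻¹' P.feas) :=
    hcl.preimage (by fun_prop)
  have hseg : Ioc (0 : ℝ) 1 ⊆ (fun a : ℝ => a • P.xSL + (1 - a) • x) ⁻¹' P.feas := by
    intro a ha
    apply interior_subset (s := P.feas)
    rw [hP.identifies]
    have := hP.convexId.2 (mem_univ P.xSL) (mem_univ x) ha.1.le (sub_nonneg.2 ha.2) (by ring)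
    simp only [smul_eq_mul] at this
    refine lt_of_le_of_lt this ?_
    nlinarith [mul_lt_mul_of_pos_left hsl ha.1,
      mul_le_mul_of_nonneg_left hx (sub_nonneg.2 ha.2)]
  have h0 : (0 : ℝ) ∈ closure (Ioc (0 : ℝ) 1) := by
    rw [closure_Ioc (by norm_num)]; simp
  simpa using closure_minimal hseg hc h0

/-- The quantitative estimate at a level `δ < 1` above `d*`. -/
lemma estimate (P : Setup E m) (hP : Assumptions P) (hb : Bornology.IsBounded P.S0) {δ : ℝ}
    (hδ : 0 < δ) (hδ1 : δ < 1) (hd : P.dStar < ENNReal.ofReal δ) :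
    P.R0 / (P.D0 + P.R0) * (1 - δ) ≤ (P.pStar.toReal - 1) * δ := by
  have hR := hP.R0pos
  have hD := D0_pos P hb hR
  obtain ⟨x, hxS, hfx, hphi⟩ := exists_point P hP hδ hd
  have he : P.e0 ∈ P.S0 := closedBall_subset_S0 P hR (Metric.mem_closedBall_self hR.le)
  -- `z` lies on the far side of `e0` from `x`, at distance at most `R0`.
  have hz : P.e0 - (P.R0 / P.D0) • (x - P.e0) ∈ P.S0 := by
    apply closedBall_subset_S0 P hR
    have hL := Metric.dist_le_diam_of_mem hb hxS he
    rw [dist_eq_norm] at hL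
    rw [Metric.mem_closedBall, dist_eq_norm, sub_sub_cancel_left, norm_neg, norm_smul,
      Real.norm_of_nonneg (by positivity)]
    calc P.R0 / P.D0 * ‖x - P.e0‖ ≤ P.R0 / P.D0 * P.D0 := by gcongr; exact hL
      _ = P.R0 := by field_simp
  -- The contraction of `x` is the convex combination of `x` and `z` with these weights.
  have hcomb : P.e0 + δ • (x - P.e0) = ((δ * P.D0 + P.R0) / (P.D0 + P.R0)) • x +
      ((1 - δ) * P.D0 / (P.D0 + P.R0)) • (P.e0 - (P.R0 / P.D0) • (x - P.e0)) := by
    match_scalars <;> field_simp <;> ring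
  have hfy := concave_lower_closure hP.concave hP.usc
    (a := (δ * P.D0 + P.R0) / (P.D0 + P.R0)) (b := (1 - δ) * P.D0 / (P.D0 + P.R0))
    (by positivity) (by have := sub_pos.2 hδ1; positivity) (by field_simp; ring)
    (inv_pos.2 hδ) hfx hz
  rw [← hcomb] at hfy
  have hle := hfy.trans (le_pStar P (mem_feas_of_phiS_le_one P hP (hphi.le.trans hδ1.le)))
  rw [ENNReal.ofReal_le_iff_le_toReal hP.pStarFin] at hle
  have hmul := mul_le_mul_of_nonneg_right hle hδ.le
  rw [inv_mul_cancel_right₀ hδ.ne'] at hmul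
  have : (δ * P.D0 + P.R0) / (P.D0 + P.R0) = P.R0 / (P.D0 + P.R0) * (1 - δ) + δ := by
    field_simp; ring
  linarith

/-- The boundary case: a compactness argument produces a feasible point with `f ≥ 1`. -/
lemma one_le_pStar (P : Setup E m) (hP : Assumptions P) (hb : Bornology.IsBounded P.S0)
    (h : P.dStar ≤ 1) : 1 ≤ P.pStar := by
  have hK : IsCompact P.S0 := Metric.isCompact_of_isClosed_isBounded isClosed_closure hb
  let δ : ℕ → ℝ := fun n => 1 + 1 / ((n : ℝ) + 1)
  have hδ1 : ∀ n, 1 < δ n := fun n => by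
    have : (0 : ℝ) < 1 / ((n : ℝ) + 1) := by positivity
    simp only [δ]; linarith
  have hδlim : Tendsto δ atTop (𝓝 1) := by
    simpa [δ] using (tendsto_one_div_add_atTop_nhds_zero_nat (𝕜 := ℝ)).const_add 1
  have hex : ∀ n, ∃ x ∈ P.S0, ENNReal.ofReal (δ n)⁻¹ ≤ P.f x ∧
      P.phiS (P.e0 + δ n • (x - P.e0)) < δ n := fun n =>
    exists_point P hP (one_pos.trans (hδ1 n))
      (h.trans_lt (by rw [← ENNReal.ofReal_one, ENNReal.ofReal_lt_ofReal_iff (one_pos.trans (hδ1 n))]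
                      exact hδ1 n))
  choose x hxS hfx hphi using hex
  obtain ⟨a, -, k, hk, hxa⟩ := hK.tendsto_subseq hxS
  have hδk : Tendsto (fun n => δ (k n)) atTop (𝓝 1) := hδlim.comp hk.tendsto_atTop
  have hya : Tendsto (fun n => P.e0 + δ (k n) • (x (k n) - P.e0)) atTop (𝓝 a) := by
    have := (hδk.smul (hxa.sub_const P.e0)).const_add P.e0
    simpa using this
  have hphia : P.phiS a ≤ 1 := by
    by_contra hcon
    push Not at hcon
    obtain ⟨c, hc1, hca⟩ := exists_between hcon
    have e1 := hya.eventually (hP.lscId a c hca)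
    have e2 := hδk.eventually (gt_mem_nhds hc1)
    obtain ⟨n, hn1, hn2⟩ := (e1.and e2).exists
    linarith [hphi (k n)]
  have hfa : 1 ≤ P.f a := by
    by_contra hcon
    push Not at hcon
    obtain ⟨c, hca, hc1⟩ := exists_between hcon
    have e1 := hxa.eventually (hP.usc a c hca)
    have hlim : Tendsto (fun n => ENNReal.ofReal (δ (k n))⁻¹) atTop (𝓝 1) := by
      simpa using ENNReal.tendsto_ofReal (hδk.inv₀ one_ne_zero)
    have e2 := hlim.eventually (lt_mem_nhds hc1)
    obtain ⟨n, hn1, hn2⟩ := (e1.and e2).exists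
    exact absurd (hn2.trans_le (hfx (k n))) (not_lt.2 hn1.le)
  exact hfa.trans (le_pStar P (mem_feas_of_phiS_le_one P hP hphia))

/-- Theorem 3 of the paper: under (A1)-(A4), if `1 - d* ≥ 0` then
`p* - 1 ≥ (R0 / (D0 + R0)) * (1 - d*) / d*`. -/
theorem statement3 (P : Setup E m) (hP : Assumptions P) (h : P.dStar ≤ 1) :
    P.R0 / (P.D0 + P.R0) * ((1 - P.dStar.toReal) / P.dStar.toReal) ≤
      P.pStar.toReal - 1 := by
  have hb : Bornology.IsBounded P.S0 := Metric.isBounded_iff_ediam_ne_top.2 hP.diamFin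
  have hdfin : P.dStar ≠ ⊤ := ne_top_of_le_ne_top ENNReal.one_ne_top h
  have hp1 : 1 ≤ P.pStar.toReal := by
    rw [← ENNReal.ofReal_le_iff_le_toReal hP.pStarFin, ENNReal.ofReal_one]
    exact one_le_pStar P hP hb h
  -- For `d* = 0` the quotient by zero is `0`, and the bound reduces to `p* ≥ 1`.
  rcases (ENNReal.toReal_nonneg (a := P.dStar)).eq_or_lt with h0 | hpos
  · rw [← h0]; simp [hp1]
  have hd1 : P.dStar.toReal ≤ 1 := by
    simpa using ENNReal.toReal_mono ENNReal.one_ne_top h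
  rcases hd1.eq_or_lt with hd1 | hd1
  · rw [hd1]; simp [hp1]
  rw [← mul_div_assoc, div_le_iff₀ hpos]
  have hc : IsClosed {δ : ℝ | P.R0 / (P.D0 + P.R0) * (1 - δ) ≤ (P.pStar.toReal - 1) * δ} :=
    isClosed_le (by fun_prop) (by fun_prop)
  have hmem : P.dStar.toReal ∈ closure (Ioo P.dStar.toReal 1) := by
    rw [closure_Ioo hd1.ne]; exact ⟨le_rfl, hd1.le⟩
  refine closure_minimal (fun δ hδ => ?_) hc hmem
  exact estimate P hP hb (hpos.trans hδ.1) hδ.2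
    ((ENNReal.lt_ofReal_iff_toReal_lt hdfin).2 hδ.1)

end MultiRadial
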